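/- Let μ be a finite Borel measure on [0,∞), let α : ℝ → ℝ be continuous with compact support with Fourier transform α̂(ω) = ∫_ℝ α(t) e^{-iωt} dt satisfying α̂(0) ≠ 0, and let δ > 0. If lim_{R→∞} ∫_{[0,∞)} α̂(δR√s) dμ(s) = α̂(0) · μ([0,∞)), then μ((0,∞)) = 0, i.e. μ is the point mass μ({0}) · δ₀ concentrated at s = 0. -/

import Mathlib

open MeasureTheory Filter
open scoped Topology

/-- One-dimensional Fourier transform `f̂(ω) = ∫_ℝ f(t) e^{-iωt} dt` of a real function. -/
noncomputable def fourier1d (f : ℝ → ℝ) (ω : ℝ) : ℂ :=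
  ∫ t : ℝ, (f t : ℂ) * Complex.exp (-(Complex.I * ω * t))

/-!
By the Riemann–Lebesgue lemma `α̂` vanishes at infinity, so as `R → ∞` the integrand `α̂(δR√s)`
tends to `α̂(0)` where `√s = 0` and to `0` elsewhere, and dominated convergence identifies the
smearing limit as `α̂(0) · μ({√s = 0})`. If this is all of `α̂(0) · μ([0,∞))`, then `√s = 0` almost
everywhere.
-/

open scoped FourierTransform ZeroAtInfty

section Dilation

variable {𝕜 V E ι : Type*} [NontriviallyNormedField 𝕜] [CompleteSpace 𝕜]
  [NormedAddCommGroup V] [NormedSpace 𝕜 V] [NormedAddCommGroup E]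
  {l : Filter ι} {c : ι → 𝕜}

theorem tendsto_zeroAtInfty_comp_smul (φ : C₀(V, E)) (hc : Tendsto c l (cocompact 𝕜)) (v : V) :
    Tendsto (fun i => φ (c i • v)) l (𝓝 (({0} : Set V).indicator (fun _ => φ 0) v)) := by
  by_cases hv : v = 0
  · simpa [hv] using tendsto_const_nhds
  · rw [Set.indicator_of_notMem (by simpa using hv)]
    exact φ.zero_at_infty'.comp ((isClosedEmbedding_smul_left hv).tendsto_cocompact.comp hc)

variable {X : Type*} [MeasurableSpace X] {μ : Measure X} [IsFiniteMeasure μ]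
  [NormedSpace ℝ E] [CompleteSpace E] {g : X → V}

theorem tendsto_integral_zeroAtInfty_comp_smul [l.IsCountablyGenerated] (φ : C₀(V, E))
    (hc : Tendsto c l (cocompact 𝕜)) (hg : AEStronglyMeasurable g μ) :
    Tendsto (fun i => ∫ x, φ (c i • g x) ∂μ) l (𝓝 (μ.real {x | g x = 0} • φ 0)) := by
  have hzero : NullMeasurableSet {x | g x = 0} μ :=
    hg.nullMeasurableSet_eq_fun aestronglyMeasurable_const
  rw [← setIntegral_const, ← integral_indicator₀ hzero]
  exact tendsto_integral_filter_of_dominated_convergence (fun _ => ‖φ‖)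
    (.of_forall fun i => φ.continuous.comp_aestronglyMeasurable (hg.const_smul (c i)))
    (.of_forall fun i => .of_forall fun x => φ.toBCF.norm_coe_le_norm _)
    (integrable_const _)
    (.of_forall fun x => tendsto_zeroAtInfty_comp_smul φ hc (g x))

theorem ae_eq_zero_of_tendsto_integral_zeroAtInfty_comp_smul [l.IsCountablyGenerated] [l.NeBot]
    (φ : C₀(V, E)) (hφ : φ 0 ≠ 0) (hc : Tendsto c l (cocompact 𝕜)) (hg : AEStronglyMeasurable g μ)
    (hlim : Tendsto (fun i => ∫ x, φ (c i • g x) ∂μ) l (𝓝 (μ.real Set.univ • φ 0))) :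
    g =ᵐ[μ] 0 := by
  have hmass : μ.real {x | g x = 0} = μ.real Set.univ := smul_left_injective ℝ hφ <|
    tendsto_nhds_unique (tendsto_integral_zeroAtInfty_comp_smul φ hc hg) hlim
  rw [measureReal_def, measureReal_def,
    ENNReal.toReal_eq_toReal_iff' (measure_ne_top _ _) (measure_ne_top _ _)] at hmass
  exact (ae_iff_measure_eq (hg.nullMeasurableSet_eq_fun aestronglyMeasurable_const)).2 hmass

end Dilation

theorem fourier1d_eq_fourier (f : ℝ → ℝ) (ω : ℝ) :
    fourier1d f ω = 𝓕 (fun t => (f t : ℂ)) ((2 * Real.pi)⁻¹ * ω) := by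
  rw [fourier1d, Real.fourier_real_eq_integral_exp_smul]
  congr 1 with t
  rw [smul_eq_mul, mul_comm]
  congr 2
  push_cast
  field_simp

theorem continuous_fourier1d {f : ℝ → ℝ} (hf : Integrable f) : Continuous (fourier1d f) := by
  have hcont : Continuous (𝓕 fun t => (f t : ℂ)) :=
    VectorFourier.fourierIntegral_continuous Real.continuous_fourierChar continuous_inner hf.ofReal
  rw [funext (fourier1d_eq_fourier f)]
  exact hcont.comp (continuous_const_mul _)

theorem tendsto_fourier1d_cocompact (f : ℝ → ℝ) :
    Tendsto (fourier1d f) (cocompact ℝ) (𝓝 0) := by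
  rw [funext (fourier1d_eq_fourier f)]
  exact (Real.zero_at_infty_fourier _).comp
    (tendsto_cocompact_mul_left₀ (inv_ne_zero Real.two_pi_pos.ne'))

/-- The Fourier transform of an integrable function, bundled as a continuous function vanishing at
infinity so that it can serve as a smearing profile. -/
noncomputable def fourier1dZeroAtInfty (f : ℝ → ℝ) (hf : Integrable f) : C₀(ℝ, ℂ) where
  toFun := fourier1d f
  continuous_toFun := continuous_fourier1d hf
  zero_at_infty' := tendsto_fourier1d_cocompact f

theorem eq_smul_dirac_of_measure_compl_singleton_eq_zero {X : Type*} [MeasurableSpace X]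
    {μ : Measure X} {a : X} (h : μ {a}ᶜ = 0) : μ = μ {a} • Measure.dirac a := by
  rw [← Measure.restrict_singleton]
  exact (Measure.restrict_eq_self_of_ae_mem h).symm

theorem spectral_measure_eq_dirac_of_smearing_limit_general
    (μ : Measure ℝ) [IsFiniteMeasure μ] (hμ : μ (Set.Iio 0) = 0)
    (α : ℝ → ℝ) (hα : Integrable α) (hα0 : fourier1d α 0 ≠ 0)
    (δ : ℝ) (hδ : δ ≠ 0)
    (hlim : Tendsto (fun R : ℝ => ∫ s, fourier1d α (δ * R * Real.sqrt s) ∂μ)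
      atTop (𝓝 ((μ (Set.Ici 0)).toReal • fourier1d α 0))) :
    μ (Set.Ioi 0) = 0 ∧ μ = μ {0} • Measure.dirac (0 : ℝ) := by
  have hscale : Tendsto (fun R : ℝ => δ * R) atTop (cocompact ℝ) :=
    (tendsto_cocompact_mul_left₀ hδ).mono_left atTop_le_cocompact
  have hmass : μ (Set.Ici 0) = μ Set.univ := by
    rw [← Set.compl_Iio]
    exact measure_congr (ae_eq_univ.2 (by rwa [compl_compl]))
  rw [hmass] at hlim
  have hsqrt : Real.sqrt =ᵐ[μ] 0 :=
    ae_eq_zero_of_tendsto_integral_zeroAtInfty_comp_smul (fourier1dZeroAtInfty α hα) hα0 hscale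
      Real.continuous_sqrt.aestronglyMeasurable hlim
  have hpos : μ (Set.Ioi 0) = 0 :=
    measure_mono_null (fun s hs => (Real.sqrt_pos.2 hs).ne') hsqrt
  refine ⟨hpos, eq_smul_dirac_of_measure_compl_singleton_eq_zero ?_⟩
  rw [← Set.Iio_union_Ioi]
  exact measure_union_null hμ hpos

/-- If for a finite Borel measure `μ` supported on `[0,∞)`, a continuous compactly
supported `α` with `α̂(0) ≠ 0`, and some `δ > 0`, the full mass of the spectral measure
survives the smearing limit, i.e. `lim_{R→∞} ∫ α̂(δR√s) dμ(s) = α̂(0) · μ([0,∞))`,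
then `μ((0,∞)) = 0`, i.e. `μ` is the point mass `μ({0}) · δ₀` concentrated at `s = 0`. -/
theorem spectral_measure_eq_dirac_of_smearing_limit
    (μ : Measure ℝ) [IsFiniteMeasure μ] (hμ : μ (Set.Iio 0) = 0)
    (α : ℝ → ℝ) (hαc : Continuous α) (hαs : HasCompactSupport α)
    (hα0 : fourier1d α 0 ≠ 0)
    (δ : ℝ) (hδ : 0 < δ)
    (hlim : Tendsto (fun R : ℝ => ∫ s, fourier1d α (δ * R * Real.sqrt s) ∂μ)
      atTop (𝓝 ((μ (Set.Ici 0)).toReal • fourier1d α 0))) :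
    μ (Set.Ioi 0) = 0 ∧ μ = μ {0} • Measure.dirac (0 : ℝ) := by
  exact spectral_measure_eq_dirac_of_smearing_limit_general μ hμ α
    (hαc.integrable_of_hasCompactSupport hαs) hα0 δ hδ.ne' hlim
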